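/- arXiv:2510.05262 — 7 statements merged into one kernel-verified Lean document; each statement's English description precedes it below -/
import Mathlib

section
/- For all natural numbers n and t with t + 1 ≤ n, and every real number ε satisfying 0 ≤ ε ≤ (t/n) / (2·e·(4·e + 2)), where e = exp(1), one has 5 · (n choose (t+1)) · ((4·e + 2)·ε)^(t+1) ≤ 5 · 2^(−t). -/
/-!
The tail term is controlled by `C(n, k) ≤ (e n / k) ^ k`, which combines `C(n, k) ≤ n ^ k / k!`
with `k ^ k / k! ≤ e ^ k`, the left-hand side being one term of the exponential series at `k`.
For `k = t + 1` and `x = (4 e + 2) ε` the bound on `ε` gives `e n x / k ≤ 1 / 2`.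
-/

open Real

theorem choose_le_exp_one_mul_div_pow (n k : ℕ) :
    (n.choose k : ℝ) ≤ (exp 1 * n / k) ^ k := by
  rcases eq_or_ne k 0 with rfl | hk
  · simp
  calc (n.choose k : ℝ)
      ≤ (n : ℝ) ^ k / k.factorial := Nat.choose_le_pow_div k n
    _ = (k : ℝ) ^ k / k.factorial * (n / k : ℝ) ^ k := by rw [div_pow]; field_simp
    _ ≤ exp k * (n / k : ℝ) ^ k := by
        gcongr
        exact pow_div_factorial_le_exp _ k.cast_nonneg k
    _ = (exp 1 * n / k) ^ k := by rw [← exp_one_pow, ← mul_pow, mul_div_assoc]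

theorem choose_mul_pow_le_pow {n k : ℕ} {x r : ℝ} (hx : 0 ≤ x) (hxr : exp 1 * n * x ≤ r * k) :
    n.choose k * x ^ k ≤ r ^ k := by
  rcases k.eq_zero_or_pos with rfl | hk
  · simp
  calc n.choose k * x ^ k
      ≤ (exp 1 * n / k) ^ k * x ^ k := by
        gcongr
        exact choose_le_exp_one_mul_div_pow n k
    _ = (exp 1 * n * x / k) ^ k := by rw [← mul_pow, div_mul_eq_mul_div]
    _ ≤ r ^ k := by
        gcongr
        rwa [div_le_iff₀ (by exact_mod_cast hk)]

theorem stmt_0 (n t : ℕ) (ht : t + 1 ≤ n) (ε : ℝ)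
    (hε0 : 0 ≤ ε)
    (hε : ε ≤ ((t : ℝ) / (n : ℝ)) / (2 * Real.exp 1 * (4 * Real.exp 1 + 2))) :
    5 * (n.choose (t + 1) : ℝ) * ((4 * Real.exp 1 + 2) * ε) ^ (t + 1) ≤
      5 * (2 : ℝ) ^ (-(t : ℤ)) := by
  have hn : (0 : ℝ) < n := by exact_mod_cast t.succ_pos.trans_le ht
  have hbase : exp 1 * n * ((4 * exp 1 + 2) * ε) ≤ 1 / 2 * (t + 1 : ℕ) := by
    rw [le_div_iff₀ (by positivity), le_div_iff₀ hn] at hε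
    push_cast
    linarith
  have htail : n.choose (t + 1) * ((4 * exp 1 + 2) * ε) ^ (t + 1) ≤ (1 / 2 : ℝ) ^ (t + 1) :=
    choose_mul_pow_le_pow (by positivity) hbase
  have hhalf : (1 / 2 : ℝ) ^ (t + 1) ≤ 2 ^ (-(t : ℤ)) := by
    rw [zpow_neg, zpow_natCast, ← inv_pow, ← one_div]
    exact pow_le_pow_of_le_one (by norm_num) (by norm_num) t.le_succ
  rw [mul_assoc]
  gcongr
  exact htail.trans hhalf
end

section
/- Let θ be a real number, let U_θ be the 2×2 complex diagonal matrix with entries exp(iθ) and exp(−iθ), and let M = U_θ ⊗ I₂ be its Kronecker product with the 2×2 identity, a matrix indexed by (Fin 2 × Fin 2). Then 2·|sin θ| is the greatest element (IsGreatest) of the set of real numbers 2·√(1 − ‖⟨ψ, M·ψ⟩‖²), where ψ ranges over vectors ψ : Fin 2 × Fin 2 → ℂ with ∑_i ‖ψ i‖² = 1, M·ψ denotes matrix-vector multiplication, and ⟨ψ, v⟩ = ∑_i conj(ψ i)·(v i). -/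
/-!
Let `p` and `q` be the weights of a unit vector `ψ` on the two eigenspaces of
`diag(a, b) ⊗ I`, where `a` and `b` have modulus one. The expectation value of this matrix in `ψ`
is the point `p a + q b` of the chord from `a` to `b`, and a point dividing a chord in the ratio
`q : p` satisfies `1 - ‖p a + q b‖² = p q ‖a - b‖²`. Since `p + q = 1`, the product `p q` is at most
`1 / 4`, with equality at the midpoint of the chord. For `a, b = exp(±iθ)` the chord has length
`2 |sin θ|`.
-/

open Matrix
open scoped Kronecker

lemma two_mul_sqrt_mul_le_add {p q : ℝ} (hp : 0 ≤ p) (hq : 0 ≤ q) : 2 * √(p * q) ≤ p + q := by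
  calc 2 * √(p * q) = 2 * √p * √q := by rw [Real.sqrt_mul hp, mul_assoc]
    _ ≤ √p ^ 2 + √q ^ 2 := two_mul_le_add_sq _ _
    _ = p + q := by rw [Real.sq_sqrt hp, Real.sq_sqrt hq]

lemma norm_exp_I_mul_sub_exp_neg (θ : ℝ) :
    ‖Complex.exp (Complex.I * θ) - Complex.exp (-(Complex.I * θ))‖ = 2 * |Real.sin θ| := by
  rw [← Complex.two_sinh, mul_comm Complex.I, Complex.sinh_mul_I, norm_mul, norm_mul,
    Complex.norm_I, mul_one, Complex.norm_two, ← Complex.ofReal_sin, Complex.norm_real,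
    Real.norm_eq_abs]

section InnerProductSpace

variable {E : Type*} [NormedAddCommGroup E] [InnerProductSpace ℝ E]

lemma norm_smul_add_smul_sq {p q : ℝ} (hpq : p + q = 1) (x y : E) :
    ‖p • x + q • y‖ ^ 2 = p * ‖x‖ ^ 2 + q * ‖y‖ ^ 2 - p * q * ‖x - y‖ ^ 2 := by
  rw [norm_add_sq_real, norm_sub_sq_real, norm_smul, norm_smul, real_inner_smul_left,
    real_inner_smul_right, mul_pow, mul_pow, Real.norm_eq_abs, Real.norm_eq_abs, sq_abs, sq_abs]
  obtain rfl := eq_sub_of_add_eq hpq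
  ring

lemma one_sub_norm_smul_add_smul_sq {p q : ℝ} (hpq : p + q = 1) {x y : E} (hx : ‖x‖ = 1)
    (hy : ‖y‖ = 1) : 1 - ‖p • x + q • y‖ ^ 2 = p * q * ‖x - y‖ ^ 2 := by
  rw [norm_smul_add_smul_sq hpq, hx, hy]
  linear_combination -hpq

end InnerProductSpace

section ExpectationValue

variable {𝕜 ι κ : Type*} [RCLike 𝕜] [Fintype ι] [Fintype κ]

/-- The expectation value `⟨ψ, A ψ⟩` of the matrix `A` in the state `ψ`, with the inner product
conjugate-linear in its first argument. Vectors are plain functions, and `ψ` need not be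
normalized. -/
def expectationValue (A : Matrix ι ι 𝕜) (ψ : ι → 𝕜) : 𝕜 :=
  star ψ ⬝ᵥ A *ᵥ ψ

variable [DecidableEq κ]

lemma expectationValue_diagonal [DecidableEq ι] (d ψ : ι → 𝕜) :
    expectationValue (diagonal d) ψ = ∑ i, ‖ψ i‖ ^ 2 • d i := by
  simp only [expectationValue, dotProduct, mulVec_diagonal, Pi.star_apply, RCLike.star_def,
    RCLike.real_smul_eq_coe_mul, RCLike.ofReal_pow, ← RCLike.conj_mul]
  exact Finset.sum_congr rfl fun i _ ↦ by ring

lemma expectationValue_diagonal_kronecker_one [DecidableEq ι] (d : ι → 𝕜) (ψ : ι × κ → 𝕜) :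
    expectationValue (diagonal d ⊗ₖ (1 : Matrix κ κ 𝕜)) ψ =
      ∑ i, (∑ j, ‖ψ (i, j)‖ ^ 2) • d i := by
  simp only [← diagonal_one, diagonal_kronecker_diagonal, expectationValue_diagonal,
    mul_one, Fintype.sum_prod_type, Finset.sum_smul]

lemma sqrt_one_sub_norm_expectationValue_sq {a b : 𝕜} (ha : ‖a‖ = 1)
    (hb : ‖b‖ = 1) {ψ : Fin 2 × κ → 𝕜} (hψ : ∑ i, ‖ψ i‖ ^ 2 = 1) :
    √(1 - ‖expectationValue (diagonal ![a, b] ⊗ₖ (1 : Matrix κ κ 𝕜)) ψ‖ ^ 2) =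
      √((∑ j, ‖ψ (0, j)‖ ^ 2) * ∑ j, ‖ψ (1, j)‖ ^ 2) * ‖a - b‖ := by
  rw [Fintype.sum_prod_type, Fin.sum_univ_two] at hψ
  rw [expectationValue_diagonal_kronecker_one, Fin.sum_univ_two, cons_val_zero, cons_val_one,
    cons_val_fin_one, one_sub_norm_smul_add_smul_sq hψ ha hb, Real.sqrt_mul' _ (sq_nonneg _),
    Real.sqrt_sq (norm_nonneg _)]

end ExpectationValue

theorem stmt_4_general {𝕜 κ : Type*} [RCLike 𝕜] [Fintype κ] [DecidableEq κ] [Nonempty κ]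
    {a b : 𝕜} (ha : ‖a‖ = 1) (hb : ‖b‖ = 1) :
    IsGreatest
      {x : ℝ | ∃ ψ : Fin 2 × κ → 𝕜, ∑ i, ‖ψ i‖ ^ 2 = 1 ∧
        x = 2 * √(1 - ‖expectationValue (diagonal ![a, b] ⊗ₖ (1 : Matrix κ κ 𝕜)) ψ‖ ^ 2)}
      ‖a - b‖ := by
  constructor
  · obtain ⟨j₀⟩ := ‹Nonempty κ›
    let ψ : Fin 2 × κ → 𝕜 := fun i ↦ Pi.single (M := fun _ ↦ 𝕜) j₀ ((√2)⁻¹ : ℝ) i.2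
    have weight_eq_half (i : Fin 2) : ∑ j, ‖ψ (i, j)‖ ^ 2 = 1 / 2 := by
      simp [ψ, Pi.single_apply, apply_ite]
    have hψ : ∑ i, ‖ψ i‖ ^ 2 = 1 := by
      simp only [Fintype.sum_prod_type, weight_eq_half, Fin.sum_univ_two, add_halves]
    refine ⟨ψ, hψ, ?_⟩
    rw [sqrt_one_sub_norm_expectationValue_sq ha hb hψ, weight_eq_half,
      Real.sqrt_mul_self (by norm_num)]
    ring
  · rintro x ⟨ψ, hψ, rfl⟩
    rw [sqrt_one_sub_norm_expectationValue_sq ha hb hψ, ← mul_assoc]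
    rw [Fintype.sum_prod_type, Fin.sum_univ_two] at hψ
    refine mul_le_of_le_one_left (norm_nonneg _) ?_
    exact (two_mul_sqrt_mul_le_add (by positivity) (by positivity)).trans_eq hψ

open Matrix in
theorem stmt_4 (θ : ℝ) :
    IsGreatest
      {x : ℝ | ∃ ψ : Fin 2 × Fin 2 → ℂ,
        (∑ i, ‖ψ i‖ ^ 2) = 1 ∧
        x = 2 * Real.sqrt (1 -
          ‖∑ i, (starRingEnd ℂ) (ψ i) *
            ((Matrix.kroneckerMap (· * ·)
              (Matrix.diagonal ![Complex.exp (Complex.I * (θ : ℂ)),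
                Complex.exp (-(Complex.I * (θ : ℂ)))])
              (1 : Matrix (Fin 2) (Fin 2) ℂ)).mulVec ψ i)‖ ^ 2)}
      (2 * |Real.sin θ|) := by
  rw [← norm_exp_I_mul_sub_exp_neg]
  exact stmt_4_general (by simp [Complex.norm_exp]) (by simp [Complex.norm_exp])
end

section
/- Let L and S be nonempty finite types, let q and q̃ be probability distributions on L × S whose S-marginals q_S and q̃_S are strictly positive, let f : S → L, and let δ ≥ 0 satisfy TVD(q, q̃) ≤ δ. Then ∑_{s ∈ S} q_S(s) · | q(f s, s)/q_S(s) − q̃(f s, s)/q̃_S(s) | ≤ 4δ. -/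
/-!
At a fixed `s`, let `A`, `B` be the masses of `q (·, s)`, `qt (·, s)` and `a`, `b` the parts of them
lying in an event, and put `t = b / B ∈ [0, 1]`. Then
`A * (a / A - b / B) = (1 - t) * (a - b) - t * ((A - a) - (B - b))`,
so the left side is at most the discrepancy on the event plus that on its complement, that is, the
`ℓ¹` distance of the two fibres. Summing over `s` gives the bound `∑ x, |q x - qt x|`, twice the
total variation distance.
-/

section ConditionalProbability

variable {𝕜 ι : Type*} [Field 𝕜] [LinearOrder 𝕜] [IsStrictOrderedRing 𝕜]

theorem mul_abs_div_sub_div_le {A B a b : 𝕜} (hA : 0 < A) (hB : 0 < B) (hb : 0 ≤ b) (hbB : b ≤ B) :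
    A * |a / A - b / B| ≤ |a - b| + |(A - a) - (B - b)| := by
  have weight_nonneg : 0 ≤ b / B := div_nonneg hb hB.le
  have weight_le_one : b / B ≤ 1 := (div_le_one hB).2 hbB
  calc A * |a / A - b / B|
      = |A * (a / A - b / B)| := by rw [abs_mul, abs_of_pos hA]
    _ = |(1 - b / B) * (a - b) - b / B * ((A - a) - (B - b))| := by
        congr 1
        field_simp
        ring
    _ ≤ |(1 - b / B) * (a - b)| + |b / B * ((A - a) - (B - b))| := abs_sub _ _
    _ = (1 - b / B) * |a - b| + b / B * |(A - a) - (B - b)| := by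
        rw [abs_mul, abs_mul, abs_of_nonneg (sub_nonneg.2 weight_le_one),
          abs_of_nonneg weight_nonneg]
    _ ≤ |a - b| + |(A - a) - (B - b)| :=
        add_le_add (mul_le_of_le_one_left (abs_nonneg _) (sub_le_self 1 weight_nonneg))
          (mul_le_of_le_one_left (abs_nonneg _) weight_le_one)

theorem sum_mul_abs_div_sum_sub_div_sum_le [Fintype ι] {p r : ι → 𝕜} (hr : ∀ i, 0 ≤ r i)
    (hp_sum : 0 < ∑ i, p i) (hr_sum : 0 < ∑ i, r i) (E : Finset ι) :
    (∑ i, p i) * |(∑ i ∈ E, p i) / (∑ i, p i) - (∑ i ∈ E, r i) / (∑ i, r i)| ≤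
      ∑ i, |p i - r i| := by
  classical
  have sum_sub_sum_event (u : ι → 𝕜) : ∑ i, u i - ∑ i ∈ E, u i = ∑ i ∈ Eᶜ, u i :=
    sub_eq_of_eq_add' (E.sum_add_sum_compl u).symm
  have abs_sum_sub_sum_le (F : Finset ι) :
      |∑ i ∈ F, p i - ∑ i ∈ F, r i| ≤ ∑ i ∈ F, |p i - r i| := by
    rw [← Finset.sum_sub_distrib]
    exact Finset.abs_sum_le_sum_abs _ _
  have event_le_total : ∑ i ∈ E, r i ≤ ∑ i, r i :=
    Finset.sum_le_univ_sum_of_nonneg hr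
  calc _ ≤ |∑ i ∈ E, p i - ∑ i ∈ E, r i| +
        |(∑ i, p i - ∑ i ∈ E, p i) - (∑ i, r i - ∑ i ∈ E, r i)| :=
        mul_abs_div_sub_div_le hp_sum hr_sum (E.sum_nonneg fun i _ ↦ hr i) event_le_total
    _ = |∑ i ∈ E, p i - ∑ i ∈ E, r i| + |∑ i ∈ Eᶜ, p i - ∑ i ∈ Eᶜ, r i| := by
        rw [sum_sub_sum_event, sum_sub_sum_event]
    _ ≤ ∑ i ∈ E, |p i - r i| + ∑ i ∈ Eᶜ, |p i - r i| :=
        add_le_add (abs_sum_sub_sum_le E) (abs_sum_sub_sum_le Eᶜ)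
    _ = ∑ i, |p i - r i| := E.sum_add_sum_compl _

theorem stmt_6_general {L S : Type*} [Fintype L] [Fintype S] (q qt : L × S → 𝕜)
    (hqt0 : ∀ x, 0 ≤ qt x)
    (hqS : ∀ s : S, 0 < ∑ l, q (l, s)) (hqtS : ∀ s : S, 0 < ∑ l, qt (l, s))
    (E : S → Finset L) :
    ∑ s, (∑ l, q (l, s)) *
        |(∑ l ∈ E s, q (l, s)) / (∑ l, q (l, s)) - (∑ l ∈ E s, qt (l, s)) / (∑ l, qt (l, s))| ≤
      ∑ x, |q x - qt x| := by
  rw [Fintype.sum_prod_type_right]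
  exact Finset.sum_le_sum fun s _ ↦
    sum_mul_abs_div_sum_sub_div_sum_le (fun l ↦ hqt0 (l, s)) (hqS s) (hqtS s) (E s)

end ConditionalProbability

theorem stmt_6 {L S : Type*} [Fintype L] [Fintype S] [Nonempty L] [Nonempty S]
    (q qt : L × S → ℝ)
    (hq0 : ∀ x, 0 ≤ q x) (hq1 : ∑ x, q x = 1)
    (hqt0 : ∀ x, 0 ≤ qt x) (hqt1 : ∑ x, qt x = 1)
    (hqS : ∀ s : S, 0 < ∑ l, q (l, s)) (hqtS : ∀ s : S, 0 < ∑ l, qt (l, s))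
    (f : S → L) (δ : ℝ) (hδ : 0 ≤ δ)
    (htvd : (1 / 2) * ∑ x, |q x - qt x| ≤ δ) :
    ∑ s, (∑ l, q (l, s)) *
        |q (f s, s) / (∑ l, q (l, s)) - qt (f s, s) / (∑ l, qt (l, s))| ≤ 4 * δ := by
  have peak_bound := stmt_6_general q qt hqt0 hqS hqtS fun s ↦ {f s}
  simp only [Finset.sum_singleton] at peak_bound
  linarith
end

section
/- Let L and S be nonempty finite types, let q and q̃ be probability distributions on L × S whose S-marginals q_S and q̃_S are strictly positive, let f : S → L, and let δ ≥ 0 satisfy TVD(q, q̃) ≤ δ. Assume q̃ has exact conditional peaks along f, i.e. q̃(f s, s) = q̃_S(s) for every s ∈ S. Then for every real a > 0, the q_S-probability of the set of syndromes with a deficient peak is small: ∑_{s ∈ S, q(f s, s) ≤ (1 − a)·q_S(s)} q_S(s) ≤ 4δ/a. -/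
/-!
The distribution `qt` gives full mass to the graph of `f`, so `q` puts at most the total variation
distance off the graph. A deficient syndrome `s` has at least the fraction `a` of its mass there,
and Markov's inequality concludes. Because only the probabilities of a single event are compared,
the constant is `1` rather than `4`.
-/

section

variable {ι X L S 𝕜 : Type*} [Fintype X] [Fintype L] [Fintype S]
  [Field 𝕜] [LinearOrder 𝕜]

/-- The total variation distance of two functions on a finite type, as half their `ℓ¹` distance.
Neither function is required to be a probability distribution. -/
def tvDist (p q : X → 𝕜) : 𝕜 := (1 / 2) * ∑ x, |p x - q x|

lemma tvDist_comm [IsOrderedAddMonoid 𝕜] (p q : X → 𝕜) : tvDist p q = tvDist q p := by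
  simp only [tvDist, abs_sub_comm]

variable [IsStrictOrderedRing 𝕜]

lemma sum_sub_sum_le_tvDist {p q : X → 𝕜} (hpq : ∑ x, p x = ∑ x, q x) (A : Finset X) :
    ∑ x ∈ A, p x - ∑ x ∈ A, q x ≤ tvDist p q := by
  classical
  have excess_eq_deficit : ∑ x ∈ A, (p x - q x) = ∑ x ∈ Aᶜ, (q x - p x) := by
    have hp := Finset.sum_add_sum_compl A p
    have hq := Finset.sum_add_sum_compl A q
    simp only [Finset.sum_sub_distrib]
    linarith
  have excess_le : ∑ x ∈ A, (p x - q x) ≤ ∑ x ∈ A, |p x - q x| :=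
    Finset.sum_le_sum fun x _ ↦ le_abs_self _
  have deficit_le : ∑ x ∈ Aᶜ, (q x - p x) ≤ ∑ x ∈ Aᶜ, |p x - q x| :=
    Finset.sum_le_sum fun x _ ↦ abs_sub_comm (p x) (q x) ▸ le_abs_self _
  have habs := Finset.sum_add_sum_compl A fun x ↦ |p x - q x|
  rw [tvDist, ← Finset.sum_sub_distrib]
  linarith

lemma sum_filter_mul_le_le_sum_div {s : Finset ι} {w g : ι → 𝕜} (hg : ∀ i ∈ s, 0 ≤ g i)
    {a : 𝕜} (ha : 0 < a) :
    ∑ i ∈ s with a * w i ≤ g i, w i ≤ (∑ i ∈ s, g i) / a := by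
  rw [le_div_iff₀' ha, Finset.mul_sum]
  calc ∑ i ∈ s with a * w i ≤ g i, a * w i
      ≤ ∑ i ∈ s with a * w i ≤ g i, g i :=
        Finset.sum_le_sum fun i hi ↦ (Finset.mem_filter.mp hi).2
    _ ≤ ∑ i ∈ s, g i :=
        Finset.sum_le_sum_of_subset_of_nonneg (Finset.filter_subset _ _) fun i hi _ ↦ hg i hi

lemma sum_marginal_sub_peak_le_tvDist {q qt : L × S → 𝕜} (hmass : ∑ x, q x = ∑ x, qt x)
    {f : S → L} (hpeak : ∀ s, qt (f s, s) = ∑ l, qt (l, s)) :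
    ∑ s, (∑ l, q (l, s) - q (f s, s)) ≤ tvDist q qt := by
  let graph : S ↪ L × S := ⟨fun s ↦ (f s, s), fun _ _ h ↦ congrArg Prod.snd h⟩
  have hgraph (r : L × S → 𝕜) : ∑ x ∈ Finset.univ.map graph, r x = ∑ s, r (f s, s) :=
    Finset.sum_map _ _ _
  calc ∑ s, (∑ l, q (l, s) - q (f s, s))
      = ∑ x, q x - ∑ s, q (f s, s) := by
        rw [Finset.sum_sub_distrib, ← Fintype.sum_prod_type_right]
    _ = ∑ s, qt (f s, s) - ∑ s, q (f s, s) := by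
        simp only [hmass, hpeak, Fintype.sum_prod_type_right]
    _ ≤ tvDist qt q := by
        simpa only [hgraph] using sum_sub_sum_le_tvDist hmass.symm (Finset.univ.map graph)
    _ = tvDist q qt := tvDist_comm qt q

theorem stmt_7_general {q qt : L × S → 𝕜} (hq : ∀ x, 0 ≤ q x) (hmass : ∑ x, q x = ∑ x, qt x)
    {f : S → L} {δ : 𝕜} (htvd : tvDist q qt ≤ δ)
    (hpeak : ∀ s, qt (f s, s) = ∑ l, qt (l, s)) {a : 𝕜} (ha : 0 < a) :
    ∑ s with q (f s, s) ≤ (1 - a) * ∑ l, q (l, s), ∑ l, q (l, s) ≤ δ / a := by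
  have off_peak_nonneg (s : S) : 0 ≤ ∑ l, q (l, s) - q (f s, s) :=
    sub_nonneg.mpr <|
      Finset.single_le_sum (f := fun l ↦ q (l, s)) (fun l _ ↦ hq (l, s)) (Finset.mem_univ (f s))
  have deficient_iff (s : S) : q (f s, s) ≤ (1 - a) * ∑ l, q (l, s) ↔
      a * ∑ l, q (l, s) ≤ ∑ l, q (l, s) - q (f s, s) := by
    rw [one_sub_mul, le_sub_comm]
  simp only [deficient_iff]
  calc ∑ s with a * ∑ l, q (l, s) ≤ ∑ l, q (l, s) - q (f s, s), ∑ l, q (l, s)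
      ≤ (∑ s, (∑ l, q (l, s) - q (f s, s))) / a :=
        sum_filter_mul_le_le_sum_div (fun s _ ↦ off_peak_nonneg s) ha
    _ ≤ δ / a := by
        gcongr
        exact (sum_marginal_sub_peak_le_tvDist hmass hpeak).trans htvd

end

theorem stmt_7 {L S : Type*} [Fintype L] [Fintype S] [Nonempty L] [Nonempty S]
    (q qt : L × S → ℝ)
    (hq0 : ∀ x, 0 ≤ q x) (hq1 : ∑ x, q x = 1)
    (hqt0 : ∀ x, 0 ≤ qt x) (hqt1 : ∑ x, qt x = 1)
    (hqS : ∀ s : S, 0 < ∑ l, q (l, s)) (hqtS : ∀ s : S, 0 < ∑ l, qt (l, s))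
    (f : S → L) (δ : ℝ) (hδ : 0 ≤ δ)
    (htvd : (1 / 2) * ∑ x, |q x - qt x| ≤ δ)
    (hpeak : ∀ s : S, qt (f s, s) = ∑ l, qt (l, s))
    (a : ℝ) (ha : 0 < a) :
    ∑ s ∈ Finset.univ.filter (fun s : S => q (f s, s) ≤ (1 - a) * ∑ l, q (l, s)),
      (∑ l, q (l, s)) ≤ 4 * δ / a :=
  (stmt_7_general hq0 (hq1.trans hqt1.symm) htvd hpeak ha).trans <| by
    gcongr
    linarith
end

section
/- Let L and S be nonempty finite types, let q be a probability distribution on L × S with S-marginal q_S, let f : S → L, and let η ∈ [0,1] satisfy q(f s, s) ≥ (1 − η)·q_S(s) for every s ∈ S. Then the collision probability satisfies ∑_{(l,s) ∈ L × S} q(l,s)² ≥ (1 − η)² / |S|, where |S| is the cardinality of S. -/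
/-! Summing the peak hypothesis over syndromes shows that the peaks `q (f s, s)` have total mass at
least `1 - η`. By Cauchy–Schwarz over `S`, their squares sum to at least `(1 - η) ^ 2 / |S|`, and
the peaks are only some of the terms of the collision probability. -/

section Injective

variable {ι κ : Type*} [Fintype ι] [Fintype κ] {e : ι → κ}

theorem sum_comp_le_sum_of_injective {M : Type*} [AddCommMonoid M] [Preorder M]
    [IsOrderedAddMonoid M] (he : Function.Injective e) {g : κ → M} (hg : ∀ k, 0 ≤ g k) :
    ∑ i, g (e i) ≤ ∑ k, g k :=
  calc ∑ i, g (e i) = ∑ k ∈ Finset.univ.map ⟨e, he⟩, g k :=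
        (Finset.sum_map Finset.univ ⟨e, he⟩ g).symm
    _ ≤ ∑ k, g k := Finset.sum_le_univ_sum_of_nonneg hg

theorem sq_sum_comp_le_card_mul_sum_sq_of_injective {R : Type*} [Semiring R] [LinearOrder R]
    [IsStrictOrderedRing R] [ExistsAddOfLE R] (he : Function.Injective e) (g : κ → R) :
    (∑ i, g (e i)) ^ 2 ≤ Fintype.card ι * ∑ k, g k ^ 2 :=
  calc (∑ i, g (e i)) ^ 2 ≤ Fintype.card ι * ∑ i, g (e i) ^ 2 := sq_sum_le_card_mul_sum_sq
    _ ≤ Fintype.card ι * ∑ k, g k ^ 2 :=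
      mul_le_mul_of_nonneg_left
        (sum_comp_le_sum_of_injective (g := fun k => g k ^ 2) he fun k => sq_nonneg (g k))
        (Nat.cast_nonneg _)

end Injective

section Peaks

variable {L S : Type*} [Fintype L] [Fintype S]

theorem mul_sum_le_sum_of_forall_mul_marginal_le {R : Type*} [NonUnitalNonAssocSemiring R]
    [Preorder R] [IsOrderedAddMonoid R] {q : L × S → R} {p : S → R} {c : R}
    (h : ∀ s, c * ∑ l, q (l, s) ≤ p s) :
    c * ∑ x, q x ≤ ∑ s, p s :=
  calc c * ∑ x, q x = ∑ s, c * ∑ l, q (l, s) := by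
        rw [Fintype.sum_prod_type_right, Finset.mul_sum]
    _ ≤ ∑ s, p s := Finset.sum_le_sum fun s _ => h s

theorem stmt_9_general {K : Type*} [Field K] [LinearOrder K] [IsStrictOrderedRing K] [Nonempty S]
    (q : L × S → K) (hq : 0 ≤ ∑ x, q x) (f : S → L) {η : K} (hη : η ≤ 1)
    (hpeak : ∀ s, (1 - η) * ∑ l, q (l, s) ≤ q (f s, s)) :
    ((1 - η) * ∑ x, q x) ^ 2 / Fintype.card S ≤ ∑ x, q x ^ 2 := by
  have hmass : (1 - η) * ∑ x, q x ≤ ∑ s, q (f s, s) :=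
    mul_sum_le_sum_of_forall_mul_marginal_le hpeak
  have hgraph : Function.Injective fun s => (f s, s) := fun _ _ h => congrArg Prod.snd h
  rw [div_le_iff₀' (Nat.cast_pos.2 Fintype.card_pos)]
  calc ((1 - η) * ∑ x, q x) ^ 2 ≤ (∑ s, q (f s, s)) ^ 2 :=
        pow_le_pow_left₀ (mul_nonneg (sub_nonneg.2 hη) hq) hmass 2
    _ ≤ Fintype.card S * ∑ x, q x ^ 2 := sq_sum_comp_le_card_mul_sum_sq_of_injective hgraph q

end Peaks

theorem stmt_9 {L S : Type*} [Fintype L] [Fintype S] [Nonempty L] [Nonempty S]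
    (q : L × S → ℝ)
    (hq0 : ∀ x, 0 ≤ q x) (hq1 : ∑ x, q x = 1)
    (f : S → L) (η : ℝ) (hη : η ∈ Set.Icc (0 : ℝ) 1)
    (hpeak : ∀ s : S, (1 - η) * (∑ l, q (l, s)) ≤ q (f s, s)) :
    (1 - η) ^ 2 / (Fintype.card S : ℝ) ≤ ∑ x : L × S, q x ^ 2 := by
  simpa only [hq1, mul_one] using stmt_9_general q (hq1 ▸ zero_le_one) f hη.2 hpeak
end

section
/- Let C be a binary linear code of length n and dimension k over 𝔽₂, and let θ be a real number with cos(θ/2) ≠ 0. Then ∑_{d ∈ C^⊥} exp(i·θ·wt(d)) = 2^{n−k} · exp(i·θ·n/2) · cos(θ/2)^n · ∑_{c ∈ C} (−i·tan(θ/2))^{wt(c)}, as an identity of complex numbers. -/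
/-!
Let `ψ` be a primitive additive character of a finite commutative ring `A` and `C ⊆ Aⁿ` a linear
code. The sum of `ψ (c ⬝ d) * f d` over `c ∈ C` and `d ∈ Aⁿ` can be evaluated in two ways. Summing
over `c` first, orthogonality of characters on `C` keeps only the words `d` of the dual code. For
`f d = x ^ (n - wt d) * y ^ wt d`, summing over `d` first factors into sums over the coordinates.
The result is the MacWilliams identity `|C| * W_{C^⊥}(x, y) = W_C(x + (|A| - 1) * y, x - y)`. At
`A = 𝔽₂`, `x = 1`, `y = exp (iθ)` the two arguments on the right are `a = 2 * exp (iθ/2) * cos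
(θ/2)` and `a * (-i * tan (θ/2))`, and the common factor `a` comes out with exponent `n` because
`W_C` is homogeneous.
-/

open Matrix

variable {ι A R : Type*} [Fintype ι]

section WeightEnumerator

variable [DecidableEq ι] [Fintype A] [DecidableEq A] [Zero A] [CommSemiring R]

open Classical in
/-- The value at `(x, y)` of the homogeneous weight enumerator of a code `C`. The one-variable
enumerator `∑ c ∈ C, z ^ wt c` is its value at `(1, z)`. -/
noncomputable def weightEnumerator (C : Set (ι → A)) (x y : R) : R :=
  ∑ c with c ∈ C, x ^ (Fintype.card ι - hammingNorm c) * y ^ hammingNorm c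

lemma weightEnumerator_mul_mul (C : Set (ι → A)) (a x y : R) :
    weightEnumerator C (a * x) (a * y) = a ^ Fintype.card ι * weightEnumerator C x y := by
  rw [weightEnumerator, weightEnumerator, Finset.mul_sum]
  refine Finset.sum_congr rfl fun c _ ↦ ?_
  rw [← pow_sub_mul_pow a (hammingNorm_le_card_fintype (x := c)), mul_pow, mul_pow]
  ring

end WeightEnumerator

lemma prod_ite_eq_zero_eq_pow_mul_pow_hammingNorm [DecidableEq A] [Zero A] [CommMonoid R]
    (x y : R) (c : ι → A) :
    ∏ i, (if c i = 0 then x else y) =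
      x ^ (Fintype.card ι - hammingNorm c) * y ^ hammingNorm c := by
  have card_zeros : Finset.card {i | c i = 0} = Fintype.card ι - hammingNorm c := by
    have zeros_add_support := Finset.card_filter_add_card_filter_not (s := Finset.univ) (c · = 0)
    exact Nat.eq_sub_of_add_eq zeros_add_support
  rw [Finset.prod_ite, Finset.prod_const, Finset.prod_const, card_zeros, hammingNorm]

lemma addChar_sum_eq_prod {α : Type*} [AddCommMonoid A] [CommMonoid R] (ψ : AddChar A R)
    (s : Finset α) (f : α → A) : ψ (∑ i ∈ s, f i) = ∏ i ∈ s, ψ (f i) :=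
  map_prod ψ.toMonoidHom (fun i ↦ Multiplicative.ofAdd (f i)) s

section MacWilliams

variable [CommRing A]

/-- The dual code `C^⊥`, the orthogonal complement of `C` for the standard dot product. -/
def dualCode (C : Submodule A (ι → A)) : Submodule A (ι → A) :=
  C.orthogonalBilin (dotProductBilin A A)

lemma mem_dualCode {C : Submodule A (ι → A)} {d : ι → A} :
    d ∈ dualCode C ↔ ∀ c ∈ C, c ⬝ᵥ d = 0 :=
  Iff.rfl

variable [CommRing R] [IsDomain R] {ψ : AddChar A R}

open Classical in
lemma sum_addChar_dotProduct (hψ : ψ.IsPrimitive) (C : Submodule A (ι → A)) [Fintype C]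
    (d : ι → A) :
    ∑ c : C, ψ (c ⬝ᵥ d) = if d ∈ dualCode C then (Nat.card C : R) else 0 := by
  let χ : AddChar C R :=
    ψ.compAddMonoidHom (((dotProductBilin A A).flip d ∘ₗ C.subtype).toAddMonoidHom)
  have χ_eq_zero_iff : χ = 0 ↔ d ∈ dualCode C := by
    rw [AddChar.eq_zero_iff, mem_dualCode]
    refine ⟨fun hχ c hc ↦ ?_, fun hd c ↦ ?_⟩
    · by_contra hcd
      -- Primitivity yields a scalar `a` with `ψ ((c ⬝ᵥ d) * a) ≠ 1`, but `a • c` is again in `C`.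
      obtain ⟨a, ha⟩ := AddChar.ne_one_iff.1 (hψ hcd)
      have χ_smul : χ ⟨a • c, C.smul_mem a hc⟩ = ψ ((c ⬝ᵥ d) * a) := by simp [χ, mul_comm]
      exact ha (χ_smul.symm.trans (hχ _))
    · simp [χ, hd c c.2]
  calc ∑ c : C, ψ (c ⬝ᵥ d) = ∑ c, χ c := rfl
    _ = if d ∈ dualCode C then (Nat.card C : R) else 0 := by
      simp only [AddChar.sum_eq_ite, χ_eq_zero_iff, Nat.card_eq_fintype_card]

variable [Fintype A] [DecidableEq ι]

open Classical in
/-- Poisson summation: the inner sum on the left is the Fourier transform of `f` at `c`. -/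
lemma sum_mem_sum_addChar_dotProduct_mul (hψ : ψ.IsPrimitive) (C : Submodule A (ι → A))
    (f : (ι → A) → R) :
    ∑ c with c ∈ C, ∑ d, ψ (c ⬝ᵥ d) * f d = Nat.card C * ∑ d with d ∈ dualCode C, f d := by
  calc ∑ c with c ∈ C, ∑ d, ψ (c ⬝ᵥ d) * f d
      = ∑ c : C, ∑ d, ψ (c ⬝ᵥ d) * f d := Finset.sum_subtype _ (by simp) _
    _ = ∑ d, (∑ c : C, ψ (c ⬝ᵥ d)) * f d := by
      rw [Finset.sum_comm]
      simp only [Finset.sum_mul]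
    _ = Nat.card C * ∑ d with d ∈ dualCode C, f d := by
      simp only [sum_addChar_dotProduct hψ, ite_mul, zero_mul, Finset.sum_filter, Finset.mul_sum,
        mul_ite, mul_zero]

variable [DecidableEq A]

lemma sum_addChar_mul_ite (hψ : ψ.IsPrimitive) (x y : R) (b : A) :
    ∑ a, ψ (b * a) * (if a = 0 then x else y) =
      if b = 0 then x + (Fintype.card A - 1) * y else x - y := by
  have split_weight (a : A) : (if a = 0 then x else y) = y + if a = 0 then x - y else 0 := by
    split_ifs <;> ring
  simp only [split_weight, mul_add, Finset.sum_add_distrib, ← Finset.sum_mul, mul_comm b,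
    AddChar.sum_mulShift b hψ, mul_ite, mul_zero, Finset.sum_ite_eq', Finset.mem_univ, if_true,
    zero_mul, AddChar.map_zero_eq_one, one_mul]
  split_ifs <;> push_cast <;> ring

lemma sum_addChar_dotProduct_mul_pow_hammingNorm (hψ : ψ.IsPrimitive) (x y : R) (c : ι → A) :
    ∑ d, ψ (c ⬝ᵥ d) * (x ^ (Fintype.card ι - hammingNorm d) * y ^ hammingNorm d) =
      (x + (Fintype.card A - 1) * y) ^ (Fintype.card ι - hammingNorm c) *
        (x - y) ^ hammingNorm c := by
  simp only [← prod_ite_eq_zero_eq_pow_mul_pow_hammingNorm, ← sum_addChar_mul_ite hψ,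
    Fintype.prod_sum, Finset.prod_mul_distrib, dotProduct, addChar_sum_eq_prod]

theorem macWilliams_identity (hψ : ψ.IsPrimitive) (C : Submodule A (ι → A)) (x y : R) :
    Nat.card C * weightEnumerator (dualCode C : Set (ι → A)) x y =
      weightEnumerator (C : Set (ι → A)) (x + (Fintype.card A - 1) * y) (x - y) := by
  have poisson := sum_mem_sum_addChar_dotProduct_mul hψ C fun d ↦
    x ^ (Fintype.card ι - hammingNorm d) * y ^ hammingNorm d
  simp only [sum_addChar_dotProduct_mul_pow_hammingNorm hψ] at poisson
  exact poisson.symm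

lemma macWilliams_identity_binary (C : Submodule (ZMod 2) (ι → ZMod 2)) (x y : ℂ) :
    2 ^ Module.finrank (ZMod 2) C * weightEnumerator (dualCode C : Set (ι → ZMod 2)) x y =
      weightEnumerator (C : Set (ι → ZMod 2)) (x + y) (x - y) := by
  have card_code : (Nat.card C : ℂ) = 2 ^ Module.finrank (ZMod 2) C := by
    simp [Module.natCard_eq_pow_finrank (K := ZMod 2)]
  have card_field_sub_one : (Fintype.card (ZMod 2) - 1 : ℂ) = 1 := by norm_num [ZMod.card]
  rw [← card_code, macWilliams_identity (ZMod.isPrimitive_stdAddChar 2), card_field_sub_one,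
    one_mul]

end MacWilliams

section HalfAngle

open Complex

lemma one_add_exp_two_mul_mul_I (x : ℂ) : 1 + exp (2 * x * I) = 2 * exp (x * I) * cos x := by
  calc 1 + exp (2 * x * I) = exp (x * I) * (exp (x * I) + exp (-x * I)) := by
        rw [mul_add, ← exp_add, ← exp_add, neg_mul, add_neg_cancel, exp_zero, ← two_mul,
          ← mul_assoc, add_comm]
    _ = exp (x * I) * (2 * cos x) := by rw [two_cos]
    _ = 2 * exp (x * I) * cos x := by ring

lemma one_sub_exp_two_mul_mul_I (x : ℂ) :
    1 - exp (2 * x * I) = 2 * exp (x * I) * (-I * sin x) := by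
  calc 1 - exp (2 * x * I) = exp (x * I) * (exp (-x * I) - exp (x * I)) := by
        rw [mul_sub, ← exp_add, ← exp_add, neg_mul, add_neg_cancel, exp_zero, ← two_mul,
          ← mul_assoc]
    _ = exp (x * I) * (-I * (2 * sin x)) := by
        rw [two_sin]
        linear_combination exp (x * I) * (exp (-x * I) - exp (x * I)) * I_sq
    _ = 2 * exp (x * I) * (-I * sin x) := by ring

lemma one_sub_exp_two_mul_mul_I_eq_mul_tan {x : ℂ} (hx : cos x ≠ 0) :
    1 - exp (2 * x * I) = 2 * exp (x * I) * cos x * (-I * tan x) := by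
  rw [one_sub_exp_two_mul_mul_I, ← tan_mul_cos hx]
  ring

end HalfAngle

theorem stmt_12_general [DecidableEq ι] (C : Submodule (ZMod 2) (ι → ZMod 2)) {θ : ℂ}
    (hθ : Complex.cos (θ / 2) ≠ 0) :
    weightEnumerator (dualCode C : Set (ι → ZMod 2)) 1 (Complex.exp (Complex.I * θ)) =
      2 ^ (Fintype.card ι - Module.finrank (ZMod 2) C) *
        Complex.exp (Complex.I * θ * Fintype.card ι / 2) *
        Complex.cos (θ / 2) ^ Fintype.card ι *
        weightEnumerator (C : Set (ι → ZMod 2)) 1 (-Complex.I * Complex.tan (θ / 2)) := by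
  set n := Fintype.card ι
  set k := Module.finrank (ZMod 2) C
  set z := Complex.exp (Complex.I * θ)
  set w := Complex.exp (θ / 2 * Complex.I)
  set t := -Complex.I * Complex.tan (θ / 2)
  have hz : z = Complex.exp (2 * (θ / 2) * Complex.I) := by
    rw [mul_div_cancel₀ θ two_ne_zero, mul_comm]
  have hw : Complex.exp (Complex.I * θ * n / 2) = w ^ n := by
    rw [← Complex.exp_nat_mul]
    ring_nf
  have hkn : k ≤ n := by simpa [k, n] using C.finrank_le
  refine mul_left_cancel₀ (pow_ne_zero k (two_ne_zero : (2 : ℂ) ≠ 0)) ?_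
  calc 2 ^ k * weightEnumerator (dualCode C : Set (ι → ZMod 2)) 1 z
      = weightEnumerator (C : Set (ι → ZMod 2)) (1 + z) (1 - z) :=
        macWilliams_identity_binary C 1 z
    _ = (2 * w * Complex.cos (θ / 2)) ^ n * weightEnumerator (C : Set (ι → ZMod 2)) 1 t := by
        rw [hz, one_add_exp_two_mul_mul_I, one_sub_exp_two_mul_mul_I_eq_mul_tan hθ,
          ← weightEnumerator_mul_mul, mul_one]
    _ = _ := by
        rw [hw, mul_pow, mul_pow, ← pow_mul_pow_sub (2 : ℂ) hkn]
        ring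

open Classical in
/-- Evaluation of the dual weight enumerator at `e^{iθ}`:
`W_{C^⊥}(e^{iθ}) = 2^{n−k} e^{iθn/2} cos(θ/2)^n W_C(−i tan(θ/2))`. -/
theorem stmt_12 (n k : ℕ) (C : Submodule (ZMod 2) (Fin n → ZMod 2))
    (hk : Module.finrank (ZMod 2) C = k) (θ : ℝ) (hθ : Real.cos (θ / 2) ≠ 0) :
    (∑ d ∈ Finset.univ.filter
        (fun d : Fin n → ZMod 2 => ∀ c ∈ C, ∑ i, c i * d i = 0),
      Complex.exp (Complex.I * (θ : ℂ) * (hammingNorm d : ℂ)))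
    = 2 ^ (n - k) * Complex.exp (Complex.I * (θ : ℂ) * (n : ℂ) / 2) *
        ((Real.cos (θ / 2) : ℂ)) ^ n *
        ∑ c ∈ Finset.univ.filter (fun c : Fin n → ZMod 2 => c ∈ C),
          (-Complex.I * (Real.tan (θ / 2) : ℂ)) ^ hammingNorm c := by
  have hθ' : Complex.cos (θ / 2) ≠ 0 := by exact_mod_cast hθ
  simpa [weightEnumerator, mem_dualCode, dotProduct, hk, ← Complex.exp_nat_mul, mul_comm] using
    stmt_12_general C hθ'
end

section
/- Let V be a finite-dimensional vector space over ℂ, let σ be a type of syndrome labels, let P : Module.End ℂ V be idempotent (P ∘ P = P), let Π : σ → Module.End ℂ V, let ι be a finite index type, let E : ι → Module.End ℂ V, let χ : ι → ι → ℂ, let λ : ι → ι → ℂ, and let r : ι → σ. Assume: (i) for every a : ι and s : σ, Π_s ∘ (E a) ∘ P = (if s = r a then (1:ℂ) else 0) • ((E a) ∘ P); and (ii) the Knill–Laflamme condition: for all a b : ι, P ∘ (E b) ∘ (E a) ∘ P = (λ b a) • P. Then for every ρ : Module.End ℂ V with ρ = P ∘ ρ ∘ P and trace(ρ) = 1, and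 for every s : σ, the trace trace( Π_s ∘ ( ∑_{a,b} χ a b • ((E a) ∘ ρ ∘ (E b)) ) ) equals ∑_{a,b} χ a b · (if s = r a then 1 else 0) · λ b a. In particular this value does not depend on ρ. -/
/-!
Since `P * ρ = ρ`, the syndrome relation, which is about `E * P`, passes to `E * ρ`: measuring
multiplies each term `E * ρ * F` by a scalar. Cyclicity of the trace moves `F` next to `E`, and the
projectors that `ρ` absorbs on its two sides then surround `F * E`, so the Knill–Laflamme condition
reduces the trace of the term to a scalar multiple of the trace of `ρ`.
-/

theorem syndrome_mul_error_mul_state {R A : Type*} [Semigroup A] [SMul R A] [IsScalarTower R A A]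
    {P Q E ρ : A} {c : R} (hsyn : Q * E * P = c • (E * P)) (hPρ : P * ρ = ρ) :
    Q * (E * ρ) = c • (E * ρ) :=
  calc
    Q * (E * ρ) = Q * E * P * ρ := by rw [mul_assoc (Q * E), hPρ, mul_assoc]
    _ = c • (E * ρ) := by rw [hsyn, smul_mul_assoc, mul_assoc, hPρ]

section TracialFunctional

variable {R A M : Type*} [Semiring R] [NonUnitalSemiring A] [Module R A] [SMulCommClass R A A]
  [AddCommMonoid M] [Module R M]

theorem trace_error_mul_state_mul_of_knillLaflamme (τ : A →ₗ[R] M)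
    (hτ : ∀ x y, τ (x * y) = τ (y * x)) {P E F ρ : A} {l : R}
    (hKL : P * F * E * P = l • P) (hPρ : P * ρ = ρ) (hρP : ρ * P = ρ) :
    τ (E * ρ * F) = l • τ ρ :=
  calc
    τ (E * ρ * F) = τ (E * (P * ρ * P) * F) := by rw [hPρ, hρP]
    _ = τ (E * P * (ρ * P * F)) := by simp only [mul_assoc]
    _ = τ (ρ * P * F * (E * P)) := hτ _ _
    _ = τ (ρ * (P * F * E * P)) := by simp only [mul_assoc]
    _ = l • τ ρ := by rw [hKL, mul_smul_comm, hρP, map_smul]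

/-- `Q` plays the syndrome projector and `c a` the indicator of its outcome on the error `E a`;
`τ` plays the trace, and `F b` is `E b`, or `(E b)†` for errors that are not self-adjoint. -/
theorem stmt_15_general [IsScalarTower R A A] {ι κ : Type*} [Fintype ι] [Fintype κ]
    (τ : A →ₗ[R] M) (hτ : ∀ x y, τ (x * y) = τ (y * x)) {P Q ρ : A}
    (E : ι → A) (F : κ → A) (χ : ι → κ → R) (lam : κ → ι → R) (c : ι → R)
    (hsyn : ∀ a, Q * E a * P = c a • (E a * P))
    (hKL : ∀ a b, P * F b * E a * P = lam b a • P)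
    (hPρ : P * ρ = ρ) (hρP : ρ * P = ρ) :
    τ (Q * ∑ a, ∑ b, χ a b • (E a * ρ * F b)) = (∑ a, ∑ b, χ a b * c a * lam b a) • τ ρ := by
  simp only [Finset.mul_sum, map_sum, Finset.sum_smul]
  refine Finset.sum_congr rfl fun a _ => Finset.sum_congr rfl fun b _ => ?_
  calc
    τ (Q * χ a b • (E a * ρ * F b)) = χ a b • τ (Q * (E a * ρ) * F b) := by
      rw [mul_smul_comm, map_smul, mul_assoc Q]
    _ = χ a b • c a • τ (E a * ρ * F b) := by
      rw [syndrome_mul_error_mul_state (hsyn a) hPρ, smul_mul_assoc, map_smul]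
    _ = (χ a b * c a * lam b a) • τ ρ := by
      rw [trace_error_mul_state_mul_of_knillLaflamme τ hτ (hKL a b) hPρ hρP, mul_smul, mul_smul]

end TracialFunctional

open Classical in
theorem stmt_15 {V : Type*} [AddCommGroup V] [Module ℂ V] [FiniteDimensional ℂ V]
    {σ : Type*} (P : Module.End ℂ V) (hP : P * P = P)
    (Pi : σ → Module.End ℂ V)
    {ι : Type*} [Fintype ι]
    (E : ι → Module.End ℂ V) (χ : ι → ι → ℂ) (lam : ι → ι → ℂ) (r : ι → σ)
    (hsyn : ∀ (a : ι) (s : σ),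
      Pi s * E a * P = (if s = r a then (1 : ℂ) else 0) • (E a * P))
    (hKL : ∀ a b : ι, P * E b * E a * P = lam b a • P) :
    ∀ ρ : Module.End ℂ V, ρ = P * ρ * P → LinearMap.trace ℂ V ρ = 1 →
      ∀ s : σ,
        LinearMap.trace ℂ V (Pi s * ∑ a, ∑ b, χ a b • (E a * ρ * E b))
          = ∑ a, ∑ b, χ a b * (if s = r a then (1 : ℂ) else 0) * lam b a := by
  intro ρ hρ htr s
  obtain ⟨hPρ, hρP⟩ := (Subsemigroup.mem_corner_iff hP).1 ⟨ρ, hρ.symm⟩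
  rw [stmt_15_general _ (LinearMap.trace_mul_comm ℂ) E E χ lam _ (hsyn · s) hKL hPρ hρP, htr,
    smul_eq_mul, mul_one]
end
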